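/- Let Φ be a finite, reduced, irreducible, crystallographic root system with base Δ, positive roots Φ⁺, and highest root θ = Σ_{β∈Δ} m_β·β. Define the dual Coxeter number h^∨ := 1 + Σ_{β∈Δ} m_β·(β,β)/(θ,θ). Then for every long simple root α ∈ Δ, the cardinality of the set {γ ∈ Φ⁺ : ⟨γ,α^∨⟩ = −1} equals h^∨ − 2. -/

import Mathlib

open scoped RealInnerProductSpace
open scoped Classical

noncomputable section

variable {V : Type*} [NormedAddCommGroup V] [InnerProductSpace ℝ V]

/-- The coroot pairing `⟨x, γ^∨⟩ = 2(x,γ)/(γ,γ)`. -/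
def corootPairing (x γ : V) : ℝ := 2 * ⟪x, γ⟫ / ⟪γ, γ⟫

/-- The reflection `s_γ(x) = x - ⟨x,γ^∨⟩γ` associated to a root `γ`. -/
def rootReflection (γ x : V) : V := x - corootPairing x γ • γ

/-- A finite, reduced, crystallographic root system `Φ` in a real inner product
space `V`, together with a base (set of simple roots) `Δ` and the integral
coefficients `coeff γ β` of each root `γ` on each simple root `β`. -/
structure RootSystemWithBase (V : Type*) [NormedAddCommGroup V]
    [InnerProductSpace ℝ V] : Type _ where
  /-- the set of roots -/
  Φ : Finset V
  /-- the base (set of simple roots) -/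
  Δ : Finset V
  /-- the coefficient of the root `γ` on the simple root `β` -/
  coeff : V → V → ℤ
  zero_not_mem : (0 : V) ∉ Φ
  spans : Submodule.span ℝ (Φ : Set V) = ⊤
  crystallographic : ∀ γ ∈ Φ, ∀ δ ∈ Φ, ∃ n : ℤ, corootPairing γ δ = n
  reflection_mem : ∀ γ ∈ Φ, ∀ δ ∈ Φ, rootReflection γ δ ∈ Φ
  reduced : ∀ γ ∈ Φ, ∀ c : ℝ, c • γ ∈ Φ → c = 1 ∨ c = -1
  base_subset : Δ ⊆ Φ
  base_indep : LinearIndependent ℝ (fun β : (Δ : Set V) => (β : V))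
  root_eq_sum : ∀ γ ∈ Φ, γ = ∑ β ∈ Δ, (coeff γ β : ℝ) • β
  root_sign : ∀ γ ∈ Φ, (∀ β ∈ Δ, 0 ≤ coeff γ β) ∨ (∀ β ∈ Δ, coeff γ β ≤ 0)

namespace RootSystemWithBase

variable (R : RootSystemWithBase V)

/-- The positive roots `Φ⁺` with respect to the base `Δ`. -/
def Pos : Finset V := R.Φ.filter fun γ => ∀ β ∈ R.Δ, 0 ≤ R.coeff γ β

/-- The negative roots `Φ⁻ = -Φ⁺`. -/
def Neg : Finset V := R.Pos.image fun γ => -γ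

/-- Irreducibility: `Φ` admits no decomposition into two nonempty mutually
orthogonal subsets. -/
def Irreducible : Prop :=
  ∀ S ⊆ R.Φ, (∀ γ ∈ S, ∀ δ ∈ R.Φ, δ ∉ S → ⟪γ, δ⟫ = 0) → S = ∅ ∨ S = R.Φ

/-- `θ` is the highest root: it is a root whose coefficients on the base
dominate those of every root. -/
def IsHighestRoot (θ : V) : Prop :=
  θ ∈ R.Φ ∧ ∀ γ ∈ R.Φ, ∀ β ∈ R.Δ, R.coeff γ β ≤ R.coeff θ β

end RootSystemWithBase

/-!
For a positive root `ε` let `N ε` be the number of positive roots `γ` with `⟨γ,ε^∨⟩ = -1`. If `ε`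
is long, then `⟨γ,ε^∨⟩ ∈ {-1, 0, 1}` for every root `γ ≠ ±ε`, so
`∑_{γ > 0} (⟨γ,ε^∨⟩² - ⟨γ,ε^∨⟩) = 2 + 2 N ε`. Here `∑_{γ > 0} ⟨γ,ε^∨⟩` is twice the height of the
coroot `ε^∨`, because a simple reflection permutes the other positive roots, so that `∑_{γ > 0} γ`
pairs to `2` with every simple coroot. Moreover `∑_{γ > 0} ⟨γ,ε^∨⟩²` depends only on the length of
`ε`, because in an irreducible root system the invariant form `∑_γ (γ,x)(γ,y)` is proportional to
`(x,y)`. Hence `N ε` plus the height of `ε^∨` is the same for all long positive roots `ε`. At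
`ε = θ` it equals `h^∨ - 1`, since `θ` is dominant and so `N θ = 0`; for a simple root `ε` the
height of `ε^∨` is `1`.
-/

theorem corootPairing_self {x : V} (hx : x ≠ 0) : corootPairing x x = 2 :=
  mul_div_cancel_right₀ 2 (inner_self_ne_zero.mpr hx)

theorem corootPairing_neg_left (x y : V) : corootPairing (-x) y = -corootPairing x y := by
  simp only [corootPairing, inner_neg_left, mul_neg, neg_div]

theorem corootPairing_nonneg_iff {x y : V} : 0 ≤ corootPairing x y ↔ 0 ≤ ⟪x, y⟫ := by
  rcases eq_or_ne y 0 with rfl | hy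
  · simp [corootPairing]
  · rw [corootPairing, le_div_iff₀ (real_inner_self_pos.mpr hy)]
    simp

theorem corootPairing_lt_two {x y : V} (hle : ⟪x, x⟫ ≤ ⟪y, y⟫) (hne : x ≠ y) :
    corootPairing x y < 2 := by
  have hy : y ≠ 0 := by
    rintro rfl
    exact hne (by simpa using hle)
  have hdist : 0 < ⟪x - y, x - y⟫ := real_inner_self_pos.mpr (sub_ne_zero.mpr hne)
  rw [real_inner_sub_sub_self] at hdist
  rw [corootPairing, div_lt_iff₀ (real_inner_self_pos.mpr hy)]
  linarith

theorem abs_corootPairing_lt_two {x y : V} (hle : ⟪x, x⟫ ≤ ⟪y, y⟫) (hne : x ≠ y)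
    (hne' : x ≠ -y) : |corootPairing x y| < 2 := by
  have hneg : corootPairing (-x) y < 2 :=
    corootPairing_lt_two (by rwa [inner_neg_neg]) (fun h => hne' (neg_eq_iff_eq_neg.mp h))
  rw [corootPairing_neg_left] at hneg
  exact abs_lt.mpr ⟨by linarith, corootPairing_lt_two hle hne⟩

theorem rootReflection_eq_reflection (γ x : V) : rootReflection γ x = (ℝ ∙ γ)ᗮ.reflection x := by
  rw [Submodule.reflection_orthogonal_apply, Submodule.reflection_singleton_apply, rootReflection,
    corootPairing, real_inner_self_eq_norm_sq, real_inner_comm, mul_div_assoc, mul_smul,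
    ← Nat.cast_smul_eq_nsmul ℝ]
  simp

theorem rootReflection_rootReflection (γ x : V) : rootReflection γ (rootReflection γ x) = x := by
  simp only [rootReflection_eq_reflection, Submodule.reflection_reflection]

theorem inner_rootReflection_rootReflection (γ x y : V) :
    ⟪rootReflection γ x, rootReflection γ y⟫ = ⟪x, y⟫ := by
  simp only [rootReflection_eq_reflection, LinearIsometryEquiv.inner_map_map]

theorem rootReflection_self (γ : V) : rootReflection γ γ = -γ := by
  rw [rootReflection_eq_reflection, Submodule.reflection_orthogonalComplement_singleton_eq_neg]

theorem inner_rootReflection_self (γ x : V) : ⟪rootReflection γ x, γ⟫ = -⟪x, γ⟫ := by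
  rw [← inner_rootReflection_rootReflection γ x γ, rootReflection_self, inner_neg_right, neg_neg]

namespace RootSystemWithBase

variable {R : RootSystemWithBase V} {β γ δ ε θ x : V}

theorem ne_zero_of_mem (hγ : γ ∈ R.Φ) : γ ≠ 0 :=
  fun h => R.zero_not_mem (h ▸ hγ)

theorem neg_mem (hγ : γ ∈ R.Φ) : -γ ∈ R.Φ :=
  rootReflection_self γ ▸ R.reflection_mem γ hγ γ hγ

theorem coeff_eq_of_eq_sum {c : V → ℝ} (hγ : γ ∈ R.Φ) (hc : γ = ∑ β ∈ R.Δ, c β • β)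
    (hβ : β ∈ R.Δ) : (R.coeff γ β : ℝ) = c β := by
  have hindep : LinearIndepOn ℝ id (R.Δ : Set V) := R.base_indep
  have hzero : ∑ β ∈ R.Δ, ((R.coeff γ β : ℝ) - c β) • β = 0 := by
    simp only [sub_smul, Finset.sum_sub_distrib]
    rw [← hc, ← R.root_eq_sum γ hγ, sub_self]
  exact sub_eq_zero.mp (linearIndepOn_finset_iff.mp hindep _ hzero β hβ)

theorem coeff_neg (hγ : γ ∈ R.Φ) (hβ : β ∈ R.Δ) : R.coeff (-γ) β = -R.coeff γ β := by
  have hsum : -γ = ∑ β ∈ R.Δ, (-(R.coeff γ β : ℝ)) • β := by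
    simp only [neg_smul, Finset.sum_neg_distrib]
    rw [← R.root_eq_sum γ hγ]
  exact_mod_cast coeff_eq_of_eq_sum (neg_mem hγ) hsum hβ

theorem coeff_of_mem_base (hγ : γ ∈ R.Δ) (hβ : β ∈ R.Δ) :
    R.coeff γ β = if β = γ then 1 else 0 := by
  have hsum : γ = ∑ β ∈ R.Δ, (if β = γ then (1 : ℝ) else 0) • β := by
    simp [ite_smul, hγ]
  exact_mod_cast coeff_eq_of_eq_sum (R.base_subset hγ) hsum hβ

theorem coeff_rootReflection (hγ : γ ∈ R.Φ) (hδ : δ ∈ R.Δ) (hβ : β ∈ R.Δ) :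
    (R.coeff (rootReflection δ γ) β : ℝ)
      = R.coeff γ β - if β = δ then corootPairing γ δ else 0 := by
  refine coeff_eq_of_eq_sum (c := fun β => R.coeff γ β - if β = δ then corootPairing γ δ else 0)
    (R.reflection_mem δ (R.base_subset hδ) γ hγ) ?_ hβ
  simp only [sub_smul, Finset.sum_sub_distrib, ite_smul, zero_smul, Finset.sum_ite_eq', if_pos hδ]
  rw [← R.root_eq_sum γ hγ, rootReflection]

theorem inner_eq_sum_coeff (hγ : γ ∈ R.Φ) (x : V) :
    ⟪x, γ⟫ = ∑ β ∈ R.Δ, (R.coeff γ β : ℝ) * ⟪x, β⟫ := by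
  conv_lhs => rw [R.root_eq_sum γ hγ]
  simp only [inner_sum, real_inner_smul_right]

theorem mem_pos : γ ∈ R.Pos ↔ γ ∈ R.Φ ∧ ∀ β ∈ R.Δ, 0 ≤ R.coeff γ β :=
  Finset.mem_filter

theorem pos_subset : R.Pos ⊆ R.Φ :=
  Finset.filter_subset _ _

theorem base_subset_pos : R.Δ ⊆ R.Pos := by
  refine fun β hβ => mem_pos.mpr ⟨R.base_subset hβ, fun δ hδ => ?_⟩
  rw [coeff_of_mem_base hβ hδ]
  split_ifs <;> simp

theorem neg_notMem_pos (hγ : γ ∈ R.Pos) : -γ ∉ R.Pos := by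
  intro hneg
  obtain ⟨hγΦ, hγ0⟩ := mem_pos.mp hγ
  have hcoeff : ∀ β ∈ R.Δ, R.coeff γ β = 0 := fun β hβ => by
    have := (mem_pos.mp hneg).2 β hβ
    rw [coeff_neg hγΦ hβ] at this
    exact le_antisymm (neg_nonneg.mp this) (hγ0 β hβ)
  refine ne_zero_of_mem hγΦ ((R.root_eq_sum γ hγΦ).trans (Finset.sum_eq_zero fun β hβ => ?_))
  rw [hcoeff β hβ, Int.cast_zero, zero_smul]

theorem neg_mem_pos_of_notMem (hγ : γ ∈ R.Φ) (hγ' : γ ∉ R.Pos) : -γ ∈ R.Pos := by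
  refine mem_pos.mpr ⟨neg_mem hγ, fun β hβ => ?_⟩
  rw [coeff_neg hγ hβ]
  exact neg_nonneg.mpr ((R.root_sign γ hγ).resolve_left (fun h => hγ' (mem_pos.mpr ⟨hγ, h⟩)) β hβ)

theorem sdiff_pos_eq_neg : R.Φ \ R.Pos = R.Neg := by
  ext γ
  simp only [Finset.mem_sdiff, Neg, Finset.mem_image]
  constructor
  · rintro ⟨hγ, hγ'⟩
    exact ⟨-γ, neg_mem_pos_of_notMem hγ hγ', neg_neg γ⟩
  · rintro ⟨δ, hδ, rfl⟩
    exact ⟨neg_mem (pos_subset hδ), neg_notMem_pos hδ⟩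

theorem sum_roots_eq_two_mul_sum_pos {f : V → ℝ} (hf : Function.Even f) :
    ∑ γ ∈ R.Φ, f γ = 2 * ∑ γ ∈ R.Pos, f γ := by
  rw [← Finset.sum_sdiff pos_subset, sdiff_pos_eq_neg, Neg, Finset.sum_image neg_injective.injOn,
    Finset.sum_congr rfl fun γ _ => hf γ, two_mul]

theorem exists_coeff_pos_of_ne (hβ : β ∈ R.Δ) (hγ : γ ∈ R.Pos) (hne : γ ≠ β) :
    ∃ δ ∈ R.Δ, δ ≠ β ∧ 0 < R.coeff γ δ := by
  obtain ⟨hγΦ, hγ0⟩ := mem_pos.mp hγ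
  by_contra! hcon
  have hmul : γ = (R.coeff γ β : ℝ) • β := by
    conv_lhs => rw [R.root_eq_sum γ hγΦ]
    refine Finset.sum_eq_single_of_mem β hβ fun δ hδ hδβ => ?_
    rw [le_antisymm (hcon δ hδ hδβ) (hγ0 δ hδ), Int.cast_zero, zero_smul]
  have hnonneg : (0 : ℝ) ≤ R.coeff γ β := Int.cast_nonneg (hγ0 β hβ)
  rcases R.reduced β (R.base_subset hβ) _ (hmul ▸ hγΦ) with h | h
  · exact hne (by rw [hmul, h, one_smul])
  · linarith

theorem rootReflection_mem_pos_erase (hβ : β ∈ R.Δ) (hγ : γ ∈ R.Pos.erase β) :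
    rootReflection β γ ∈ R.Pos.erase β := by
  obtain ⟨hne, hpos⟩ := Finset.mem_erase.mp hγ
  have hγΦ := pos_subset hpos
  have hmem := R.reflection_mem β (R.base_subset hβ) γ hγΦ
  obtain ⟨δ, hδ, hδβ, hδpos⟩ := exists_coeff_pos_of_ne hβ hpos hne
  -- `s_β` changes only the coefficient on `β`, so the positive one on `δ` decides the sign.
  have hcoeff : R.coeff (rootReflection β γ) δ = R.coeff γ δ := by
    have := coeff_rootReflection hγΦ hβ hδ
    rw [if_neg hδβ, sub_zero] at this
    exact_mod_cast this
  refine Finset.mem_erase.mpr ⟨fun heq => ?_, mem_pos.mpr ⟨hmem, ?_⟩⟩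
  · rw [heq, coeff_of_mem_base hβ hδ, if_neg hδβ] at hcoeff
    exact hδpos.ne hcoeff
  · refine (R.root_sign _ hmem).resolve_right fun h => ?_
    exact (hcoeff ▸ hδpos).not_ge (h δ hδ)

theorem sum_pos_inner_base (hβ : β ∈ R.Δ) : ∑ γ ∈ R.Pos, ⟪γ, β⟫ = ⟪β, β⟫ := by
  have hodd : ∑ γ ∈ R.Pos.erase β, ⟪γ, β⟫ = ∑ γ ∈ R.Pos.erase β, -⟪γ, β⟫ :=
    Finset.sum_nbij' (rootReflection β) (rootReflection β)
      (fun _ => rootReflection_mem_pos_erase hβ) (fun _ => rootReflection_mem_pos_erase hβ)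
      (fun γ _ => rootReflection_rootReflection β γ)
      (fun γ _ => rootReflection_rootReflection β γ)
      (fun γ _ => by rw [inner_rootReflection_self, neg_neg])
  rw [Finset.sum_neg_distrib, self_eq_neg] at hodd
  rw [← Finset.add_sum_erase _ _ (base_subset_pos hβ), hodd, add_zero]

/-- The height of the coroot `γ^∨ = 2γ/(γ,γ)` with respect to the base `{β^∨ : β ∈ Δ}` of the dual
root system, in which the coefficient of `γ^∨` on `β^∨` is `coeff γ β * (β,β)/(γ,γ)`. The dual
Coxeter number is `1 + coheight θ`. -/
def coheight (R : RootSystemWithBase V) (γ : V) : ℝ :=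
  ∑ β ∈ R.Δ, (R.coeff γ β : ℝ) * (⟪β, β⟫ / ⟪γ, γ⟫)

theorem coheight_of_mem_base (hβ : β ∈ R.Δ) : R.coheight β = 1 := by
  rw [coheight, Finset.sum_eq_single_of_mem β hβ fun δ hδ hne => ?_]
  · rw [coeff_of_mem_base hβ hβ, if_pos rfl, Int.cast_one, one_mul,
      div_self (inner_self_ne_zero.mpr (ne_zero_of_mem (R.base_subset hβ)))]
  · rw [coeff_of_mem_base hβ hδ, if_neg hne, Int.cast_zero, zero_mul]

theorem sum_pos_corootPairing (hγ : γ ∈ R.Φ) :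
    ∑ δ ∈ R.Pos, corootPairing δ γ = 2 * R.coheight γ := by
  have hsum : ∑ δ ∈ R.Pos, ⟪δ, γ⟫ = ∑ β ∈ R.Δ, (R.coeff γ β : ℝ) * ⟪β, β⟫ := by
    simp only [inner_eq_sum_coeff hγ]
    rw [Finset.sum_comm]
    exact Finset.sum_congr rfl fun β hβ => by rw [← Finset.mul_sum, sum_pos_inner_base hβ]
  simp only [corootPairing, coheight, ← mul_div_assoc]
  rw [← Finset.sum_div, ← Finset.sum_div, ← Finset.mul_sum, hsum, mul_div_assoc]

theorem sum_inner_mul_inner (hδ : δ ∈ R.Φ) (x : V) :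
    4 * ∑ γ ∈ R.Φ, ⟪γ, δ⟫ * ⟪γ, x⟫ = (⟪δ, δ⟫ * ∑ γ ∈ R.Φ, corootPairing γ δ ^ 2) * ⟪δ, x⟫ := by
  have hrefl : ∑ γ ∈ R.Φ, ⟪γ, δ⟫ * ⟪γ, x⟫
      = ∑ γ ∈ R.Φ, ⟪rootReflection δ γ, δ⟫ * ⟪rootReflection δ γ, x⟫ :=
    Finset.sum_nbij' (rootReflection δ) (rootReflection δ)
      (R.reflection_mem δ hδ) (R.reflection_mem δ hδ)
      (fun γ _ => rootReflection_rootReflection δ γ)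
      (fun γ _ => rootReflection_rootReflection δ γ)
      (fun γ _ => by rw [rootReflection_rootReflection])
  have hterm : ∀ γ, ⟪rootReflection δ γ, δ⟫ * ⟪rootReflection δ γ, x⟫
      = ⟪δ, δ⟫ * corootPairing γ δ ^ 2 * ⟪δ, x⟫ / 2 - ⟪γ, δ⟫ * ⟪γ, x⟫ := fun γ => by
    have hδ0 : ⟪δ, δ⟫ ≠ 0 := inner_self_ne_zero.mpr (ne_zero_of_mem hδ)
    rw [inner_rootReflection_self, rootReflection, inner_sub_left, real_inner_smul_left,
      corootPairing]
    field_simp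
    ring
  simp only [hterm, Finset.sum_sub_distrib, ← Finset.sum_div, ← Finset.sum_mul,
    ← Finset.mul_sum] at hrefl
  linarith

theorem Irreducible.eq_of_forall_inner_ne_zero {X : Type*} {f : V → X} (hirr : R.Irreducible)
    (hf : ∀ γ ∈ R.Φ, ∀ κ ∈ R.Φ, ⟪γ, κ⟫ ≠ 0 → f γ = f κ) (hδ : δ ∈ R.Φ) (hε : ε ∈ R.Φ) :
    f δ = f ε := by
  have horth : ∀ γ ∈ R.Φ.filter (f · = f ε), ∀ κ ∈ R.Φ, κ ∉ R.Φ.filter (f · = f ε) →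
      ⟪γ, κ⟫ = 0 := by
    intro γ hγ κ hκ hκ'
    rw [Finset.mem_filter] at hγ hκ'
    by_contra hne
    exact hκ' ⟨hκ, (hf γ hγ.1 κ hκ hne).symm.trans hγ.2⟩
  rcases hirr _ (Finset.filter_subset _ _) horth with h | h
  · exact absurd rfl (Finset.filter_eq_empty_iff.mp h hε)
  · exact Finset.filter_eq_self.mp h δ hδ

theorem Irreducible.inner_self_mul_sum_corootPairing_sq_eq (hirr : R.Irreducible)
    (hδ : δ ∈ R.Φ) (hε : ε ∈ R.Φ) :
    ⟪δ, δ⟫ * ∑ γ ∈ R.Φ, corootPairing γ δ ^ 2 = ⟪ε, ε⟫ * ∑ γ ∈ R.Φ, corootPairing γ ε ^ 2 := by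
  refine hirr.eq_of_forall_inner_ne_zero
    (f := fun κ => ⟪κ, κ⟫ * ∑ γ ∈ R.Φ, corootPairing γ κ ^ 2) (fun κ hκ μ hμ hne => ?_) hδ hε
  refine mul_right_cancel₀ hne ?_
  rw [← sum_inner_mul_inner hκ μ, real_inner_comm μ κ, ← sum_inner_mul_inner hμ κ]
  simp only [mul_comm]

theorem Irreducible.sum_pos_corootPairing_sq_eq (hirr : R.Irreducible) (hδ : δ ∈ R.Φ) (hε : ε ∈ R.Φ)
    (hlen : ⟪δ, δ⟫ = ⟪ε, ε⟫) :
    ∑ γ ∈ R.Pos, corootPairing γ δ ^ 2 = ∑ γ ∈ R.Pos, corootPairing γ ε ^ 2 := by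
  have heven : ∀ κ : V, Function.Even fun γ => corootPairing γ κ ^ 2 := fun κ γ => by
    simp only [corootPairing_neg_left, neg_sq]
  have hsum := hirr.inner_self_mul_sum_corootPairing_sq_eq hδ hε
  rw [hlen] at hsum
  have hsum := mul_left_cancel₀ (inner_self_ne_zero.mpr (ne_zero_of_mem hε)) hsum
  rw [sum_roots_eq_two_mul_sum_pos (heven δ), sum_roots_eq_two_mul_sum_pos (heven ε)] at hsum
  exact mul_left_cancel₀ two_ne_zero hsum

theorem corootPairing_eq_neg_one_or_zero_or_one (hγ : γ ∈ R.Φ) (hε : ε ∈ R.Φ)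
    (hle : ⟪γ, γ⟫ ≤ ⟪ε, ε⟫) (hne : γ ≠ ε) (hne' : γ ≠ -ε) :
    corootPairing γ ε = -1 ∨ corootPairing γ ε = 0 ∨ corootPairing γ ε = 1 := by
  have habs := abs_corootPairing_lt_two hle hne hne'
  obtain ⟨n, hn⟩ := R.crystallographic γ hγ ε hε
  rw [hn] at habs ⊢
  have habs : |n| < 2 := by exact_mod_cast habs
  rw [abs_lt] at habs
  have hcases : n = -1 ∨ n = 0 ∨ n = 1 := by omega
  exact_mod_cast hcases

theorem corootPairing_sq_sub_self (hγ : γ ∈ R.Pos) (hε : ε ∈ R.Pos) (hle : ⟪γ, γ⟫ ≤ ⟪ε, ε⟫) :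
    corootPairing γ ε ^ 2 - corootPairing γ ε
      = (if γ = ε then 2 else 0) + if corootPairing γ ε = -1 then 2 else 0 := by
  rcases eq_or_ne γ ε with rfl | hne
  · rw [corootPairing_self (ne_zero_of_mem (pos_subset hγ))]
    norm_num
  · have hne' : γ ≠ -ε := fun h => neg_notMem_pos hε (h ▸ hγ)
    rcases corootPairing_eq_neg_one_or_zero_or_one (pos_subset hγ) (pos_subset hε) hle hne hne'
      with h | h | h <;> rw [h, if_neg hne] <;> norm_num

theorem sum_pos_corootPairing_sq_sub_self (hε : ε ∈ R.Pos)
    (hlong : ∀ γ ∈ R.Φ, ⟪γ, γ⟫ ≤ ⟪ε, ε⟫) :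
    ∑ γ ∈ R.Pos, (corootPairing γ ε ^ 2 - corootPairing γ ε)
      = 2 + 2 * ((R.Pos.filter fun γ => corootPairing γ ε = -1).card : ℝ) := by
  rw [Finset.sum_congr rfl fun γ hγ => corootPairing_sq_sub_self hγ hε (hlong γ (pos_subset hγ)),
    Finset.sum_add_distrib, Finset.sum_ite_eq', if_pos hε, ← Finset.sum_filter, Finset.sum_const,
    nsmul_eq_mul, mul_comm]

theorem Irreducible.card_add_coheight_eq (hirr : R.Irreducible) (hδ : δ ∈ R.Pos)
    (hε : ε ∈ R.Pos) (hlen : ⟪δ, δ⟫ = ⟪ε, ε⟫) (hlong : ∀ γ ∈ R.Φ, ⟪γ, γ⟫ ≤ ⟪ε, ε⟫) :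
    ((R.Pos.filter fun γ => corootPairing γ δ = -1).card : ℝ) + R.coheight δ
      = (R.Pos.filter fun γ => corootPairing γ ε = -1).card + R.coheight ε := by
  have hδsum := sum_pos_corootPairing_sq_sub_self hδ (hlen ▸ hlong)
  have hεsum := sum_pos_corootPairing_sq_sub_self hε hlong
  rw [Finset.sum_sub_distrib, sum_pos_corootPairing (pos_subset hδ)] at hδsum
  rw [Finset.sum_sub_distrib, sum_pos_corootPairing (pos_subset hε)] at hεsum
  linarith [hirr.sum_pos_corootPairing_sq_eq (pos_subset hδ) (pos_subset hε) hlen]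

/-- `x` is dominant, i.e. it lies in the closed fundamental chamber of the base `Δ`. -/
def IsDominant (R : RootSystemWithBase V) (x : V) : Prop :=
  ∀ β ∈ R.Δ, 0 ≤ ⟪x, β⟫

/-- The height of a root: the sum of its coefficients on the base. -/
def height (R : RootSystemWithBase V) (γ : V) : ℤ :=
  ∑ β ∈ R.Δ, R.coeff γ β

theorem IsDominant.inner_nonneg (hx : R.IsDominant x) (hγ : γ ∈ R.Pos) : 0 ≤ ⟪x, γ⟫ := by
  rw [inner_eq_sum_coeff (pos_subset hγ)]
  exact Finset.sum_nonneg fun β hβ =>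
    mul_nonneg (Int.cast_nonneg ((mem_pos.mp hγ).2 β hβ)) (hx β hβ)

theorem height_rootReflection (hγ : γ ∈ R.Φ) (hβ : β ∈ R.Δ) :
    (R.height (rootReflection β γ) : ℝ) = R.height γ - corootPairing γ β := by
  simp only [height, Int.cast_sum]
  rw [Finset.sum_congr rfl fun δ hδ => coeff_rootReflection hγ hβ hδ, Finset.sum_sub_distrib,
    Finset.sum_ite_eq', if_pos hβ]

theorem isDominant_of_forall_height_le (hγ : γ ∈ R.Φ)
    (hmax : ∀ β ∈ R.Δ, R.height (rootReflection β γ) ≤ R.height γ) : R.IsDominant γ := by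
  intro β hβ
  have hle : (R.height (rootReflection β γ) : ℝ) ≤ R.height γ := Int.cast_le.mpr (hmax β hβ)
  rw [height_rootReflection hγ hβ] at hle
  exact corootPairing_nonneg_iff.mp (by linarith)

theorem exists_isDominant_inner_self_eq (hγ : γ ∈ R.Φ) :
    ∃ μ ∈ R.Φ, R.IsDominant μ ∧ ⟪μ, μ⟫ = ⟪γ, γ⟫ := by
  obtain ⟨μ, hμ, hmax⟩ := Finset.exists_max_image (R.Φ.filter fun κ => ⟪κ, κ⟫ = ⟪γ, γ⟫) R.height
    ⟨γ, Finset.mem_filter.mpr ⟨hγ, rfl⟩⟩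
  obtain ⟨hμΦ, hμγ⟩ := Finset.mem_filter.mp hμ
  refine ⟨μ, hμΦ, isDominant_of_forall_height_le hμΦ fun β hβ => hmax _ ?_, hμγ⟩
  rw [Finset.mem_filter, inner_rootReflection_rootReflection]
  exact ⟨R.reflection_mem β (R.base_subset hβ) μ hμΦ, hμγ⟩

theorem IsHighestRoot.mem_pos (hθ : R.IsHighestRoot θ) : θ ∈ R.Pos := by
  refine RootSystemWithBase.mem_pos.mpr ⟨hθ.1, fun β hβ => ?_⟩
  have hle := hθ.2 β (R.base_subset hβ) β hβ
  rw [coeff_of_mem_base hβ hβ, if_pos rfl] at hle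
  exact zero_le_one.trans hle

theorem IsHighestRoot.isDominant (hθ : R.IsHighestRoot θ) : R.IsDominant θ :=
  isDominant_of_forall_height_le hθ.1 fun β hβ => Finset.sum_le_sum fun δ hδ =>
    hθ.2 _ (R.reflection_mem β (R.base_subset hβ) θ hθ.1) δ hδ

theorem IsHighestRoot.inner_le_of_isDominant (hθ : R.IsHighestRoot θ) (hx : R.IsDominant x)
    (hγ : γ ∈ R.Φ) : ⟪x, γ⟫ ≤ ⟪x, θ⟫ := by
  rw [inner_eq_sum_coeff hγ, inner_eq_sum_coeff hθ.1]
  exact Finset.sum_le_sum fun β hβ =>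
    mul_le_mul_of_nonneg_right (Int.cast_le.mpr (hθ.2 γ hγ β hβ)) (hx β hβ)

theorem IsHighestRoot.inner_self_le (hθ : R.IsHighestRoot θ) (hγ : γ ∈ R.Φ) :
    ⟪γ, γ⟫ ≤ ⟪θ, θ⟫ := by
  obtain ⟨μ, hμ, hdom, hlen⟩ := exists_isDominant_inner_self_eq hγ
  calc ⟪γ, γ⟫ = ⟪μ, μ⟫ := hlen.symm
    _ ≤ ⟪μ, θ⟫ := hθ.inner_le_of_isDominant hdom hμ
    _ = ⟪θ, μ⟫ := real_inner_comm _ _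
    _ ≤ ⟪θ, θ⟫ := hθ.inner_le_of_isDominant hθ.isDominant hμ

theorem IsHighestRoot.filter_corootPairing_eq_neg_one_eq_empty (hθ : R.IsHighestRoot θ) :
    (R.Pos.filter fun γ => corootPairing γ θ = -1) = ∅ := by
  refine Finset.filter_eq_empty_iff.mpr fun γ hγ hneg => ?_
  have hnonneg : 0 ≤ corootPairing γ θ :=
    corootPairing_nonneg_iff.mpr (real_inner_comm γ θ ▸ hθ.isDominant.inner_nonneg hγ)
  linarith

end RootSystemWithBase

theorem card_roots_pairing_neg_one_eq_dual_coxeter_sub_two_general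
    (R : RootSystemWithBase V) (hirr : R.Irreducible)
    (θ : V) (hθ : R.IsHighestRoot θ)
    (α : V) (hα : α ∈ R.Pos) (hlong : ⟪α, α⟫ = ⟪θ, θ⟫) :
    ((R.Pos.filter fun γ => corootPairing γ α = -1).card : ℝ)
      = (1 + ∑ β ∈ R.Δ, (R.coeff θ β : ℝ) * (⟪β, β⟫ / ⟪θ, θ⟫)) - (1 + R.coheight α) := by
  have hconst := hirr.card_add_coheight_eq hα hθ.mem_pos hlong fun _ => hθ.inner_self_le
  rw [hθ.filter_corootPairing_eq_neg_one_eq_empty, Finset.card_empty, Nat.cast_zero,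
    zero_add] at hconst
  rw [← RootSystemWithBase.coheight]
  linarith

/-- For a finite, reduced, irreducible, crystallographic root
system `Φ` with base `Δ`, positive roots `Φ⁺` and highest root
`θ = Σ_{β∈Δ} m_β·β`, define the dual Coxeter number
`h^∨ = 1 + Σ_{β∈Δ} m_β·(β,β)/(θ,θ)`. Then for every long simple root `α ∈ Δ`,
the cardinality of `{γ ∈ Φ⁺ : ⟨γ,α^∨⟩ = −1}` equals `h^∨ − 2`. -/
theorem card_roots_pairing_neg_one_eq_dual_coxeter_sub_two
    (R : RootSystemWithBase V) (hirr : R.Irreducible)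
    (θ : V) (hθ : R.IsHighestRoot θ)
    (α : V) (hα : α ∈ R.Δ) (hlong : ⟪α, α⟫ = ⟪θ, θ⟫) :
    ((R.Pos.filter fun γ => corootPairing γ α = -1).card : ℝ)
      = (1 + ∑ β ∈ R.Δ, (R.coeff θ β : ℝ) * (⟪β, β⟫ / ⟪θ, θ⟫)) - 2 := by
  rw [card_roots_pairing_neg_one_eq_dual_coxeter_sub_two_general R hirr θ hθ α
    (RootSystemWithBase.base_subset_pos hα) hlong, RootSystemWithBase.coheight_of_mem_base hα,
    one_add_one_eq_two]

end
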